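/- f(k) > g_r(k) holds whenever one of the following is satisfied: (1) r = 2 and k ≥ 17; (2) r = 3 and k ≥ 5; (3) r = 4 and k ≥ 4; (4) r ≥ 5 (and k ≥ 3). -/

import Mathlib

open Finset

def HyperUniform {V : Type*} (k : ℕ) (H : Finset (Finset V)) : Prop := ∀ e ∈ H, e.card = k

def IsPM {V : Type*} [Fintype V] (H M : Finset (Finset V)) : Prop :=
  M ⊆ H ∧ (∀ e ∈ M, ∀ f ∈ M, e ≠ f → Disjoint e f) ∧ ∀ v : V, ∃ e ∈ M, v ∈ e

def hdeg {V : Type*} [DecidableEq V] (H : Finset (Finset V)) (v : V) : ℕ :=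
  (H.filter (fun e => v ∈ e)).card

def IsVec (k r : ℕ) (a : ℕ → ℕ) : Prop :=
  (∀ i j : ℕ, i ≤ j → j < r → a i ≤ a j) ∧ (∑ i ∈ Finset.range r, a i) = k - 1

noncomputable def gfun (k r : ℕ) (a : ℕ → ℕ) : ℝ :=
  (((k - 1).factorial : ℝ) / (∏ i ∈ Finset.range r, ((a i).factorial : ℝ))) *
    (∏ i ∈ Finset.range r, (((r * a i + 1 : ℕ) : ℝ) / ((r * k : ℕ) : ℝ)) ^ (a i)) *
    (1 + ((a 0 : ℝ) / ((r * a 0 + 1 : ℕ) : ℝ)) *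
      ∑ i ∈ Finset.Ico 1 r, ((r * a i + 1 : ℕ) : ℝ) / ((a i + 1 : ℕ) : ℝ))

noncomputable def gThr (k r : ℕ) : ℝ :=
  sSup {x : ℝ | ∃ a : ℕ → ℕ, IsVec k r a ∧ x = gfun k r a}

noncomputable def mThr (k n : ℕ) : ℕ :=
  sInf {m : ℕ | ∀ H : Finset (Finset (Fin n)), HyperUniform k H →
    (∀ v : Fin n, m ≤ hdeg H v) → ∃ M, IsPM H M}

noncomputable def fThr (k : ℕ) : ℝ :=
  Filter.limsup (fun n : ℕ => (mThr k n : ℝ) / ((n - 1).choose (k - 1) : ℝ))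
    (Filter.atTop ⊓ Filter.principal {n : ℕ | k ∣ n})

/-! ## Normalised powers -/

noncomputable def EE (x : ℝ) (n : ℕ) : ℝ := x ^ n / (n.factorial : ℝ)

lemma EE_zero (x : ℝ) : EE x 0 = 1 := by simp [EE]

lemma EE_nonneg {x : ℝ} (hx : 0 ≤ x) (n : ℕ) : 0 ≤ EE x n := by unfold EE; positivity

lemma EE_succ (x : ℝ) (n : ℕ) : EE x (n + 1) = EE x n * (x / ((n : ℝ) + 1)) := by
  unfold EE
  rw [Nat.factorial_succ, pow_succ]
  push_cast
  have : (n.factorial : ℝ) ≠ 0 := by positivity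
  field_simp

lemma EE_conv (x y : ℝ) (n : ℕ) :
    ∑ i ∈ range (n + 1), EE x i * EE y (n - i) = EE (x + y) n := by
  unfold EE
  rw [add_pow, Finset.sum_div]
  refine Finset.sum_congr rfl fun i hi => ?_
  have hi' : i ≤ n := by simpa [Nat.lt_succ_iff] using hi
  have h1 := Nat.choose_mul_factorial_mul_factorial hi'
  have h2 : (n.factorial : ℝ) = (n.choose i : ℝ) * (i.factorial : ℝ) * ((n - i).factorial : ℝ) := by
    exact_mod_cast h1.symm
  have h3 : (n.choose i : ℝ) ≠ 0 := by
    exact_mod_cast (Nat.choose_pos hi').ne'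
  rw [h2]
  have : (i.factorial : ℝ) ≠ 0 := by positivity
  have : ((n - i).factorial : ℝ) ≠ 0 := by positivity
  field_simp

lemma EE_sub {x y : ℝ} (hx : 0 ≤ x) (hy : 0 ≤ y) (a b m : ℕ) :
    ∑ i ∈ range (m + 1), EE x (a + i) * EE y (b + (m - i)) ≤ EE (x + y) (a + b + m) := by
  rw [← EE_conv]
  have h1 : ∑ i ∈ range (m + 1), EE x (a + i) * EE y (b + (m - i))
      = ∑ j ∈ (range (m + 1)).image (fun i => a + i), EE x j * EE y (a + b + m - j) := by
    rw [Finset.sum_image (by intro i _ j _ h; simpa using h)]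
    refine Finset.sum_congr rfl fun i hi => ?_
    have hi' : i ≤ m := by simpa [Nat.lt_succ_iff] using hi
    congr 2
    omega
  rw [h1]
  refine Finset.sum_le_sum_of_subset_of_nonneg ?_ ?_
  · intro j hj
    simp only [Finset.mem_image, Finset.mem_range] at hj ⊢
    obtain ⟨i, hi, rfl⟩ := hj
    omega
  · intro i _ _
    exact mul_nonneg (EE_nonneg hx _) (EE_nonneg hy _)

lemma EE_one {x y : ℝ} (hx : 0 ≤ x) (hy : 0 ≤ y) (a b : ℕ) :
    EE x a * EE y b ≤ EE (x + y) (a + b) := by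
  have := EE_sub hx hy a b 0
  simpa using this

lemma EE_two {x y : ℝ} (hx : 0 ≤ x) (hy : 0 ≤ y) (a b : ℕ) :
    EE x a * EE y (b + 1) + EE x (a + 1) * EE y b ≤ EE (x + y) (a + b + 1) := by
  have := EE_sub hx hy a b 1
  simpa [Finset.sum_range_succ] using this

lemma EE_three {x y : ℝ} (hx : 0 ≤ x) (hy : 0 ≤ y) (a b : ℕ) :
    EE x a * EE y (b + 2) + EE x (a + 1) * EE y (b + 1) + EE x (a + 2) * EE y b
      ≤ EE (x + y) (a + b + 2) := by
  have := EE_sub hx hy a b 2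
  simpa [Finset.sum_range_succ] using this

lemma EE_four {x y : ℝ} (hx : 0 ≤ x) (hy : 0 ≤ y) (a b : ℕ) :
    EE x a * EE y (b + 3) + EE x (a + 1) * EE y (b + 2) + EE x (a + 2) * EE y (b + 1)
      + EE x (a + 3) * EE y b ≤ EE (x + y) (a + b + 3) := by
  have := EE_sub hx hy a b 3
  simpa [Finset.sum_range_succ] using this

lemma EE_five {x y : ℝ} (hx : 0 ≤ x) (hy : 0 ≤ y) (a b : ℕ) :
    EE x a * EE y (b + 4) + EE x (a + 1) * EE y (b + 3) + EE x (a + 2) * EE y (b + 2)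
      + EE x (a + 3) * EE y (b + 1) + EE x (a + 4) * EE y b ≤ EE (x + y) (a + b + 4) := by
  have := EE_sub hx hy a b 4
  simpa [Finset.sum_range_succ] using this

/-- moving one unit: comparison of neighbouring terms -/
lemma EE_move {x y v : ℝ} (hx : 0 ≤ x) (hy : 0 ≤ y) (a b : ℕ)
    (h : v * (y / ((b : ℝ) + 1)) ≤ x / ((a : ℝ) + 1)) :
    v * (EE x a * EE y (b + 1)) ≤ EE x (a + 1) * EE y b := by
  rw [EE_succ, EE_succ]
  have := mul_le_mul_of_nonneg_left h (mul_nonneg (EE_nonneg hx a) (EE_nonneg hy b))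
  nlinarith [this]

lemma EE_move' {x y v : ℝ} (hx : 0 ≤ x) (hy : 0 ≤ y) (a b : ℕ)
    (h : v * (x / ((a : ℝ) + 1)) ≤ y / ((b : ℝ) + 1)) :
    v * (EE x (a + 1) * EE y b) ≤ EE x a * EE y (b + 1) := by
  have := EE_move hy hx b a h
  linarith [mul_comm (EE x (a + 1)) (EE y b), mul_comm (EE x a) (EE y (b + 1))]

lemma half_lemma {x y : ℝ} (hx : 0 < x) (hy : 0 < y) (a b : ℕ) :
    EE x (a + 1) * EE y (b + 1) ≤ 1 / 2 * EE (x + y) (a + b + 2) := by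
  have h := EE_three hx.le hy.le a b
  set A := EE x (a + 1) * EE y (b + 1) with hA
  have hA0 : 0 ≤ A := mul_nonneg (EE_nonneg hx.le _) (EE_nonneg hy.le _)
  set s := ((a : ℝ) + 1) * y / (((b : ℝ) + 2) * x) with hs
  set t := ((b : ℝ) + 1) * x / (((a : ℝ) + 2) * y) with ht
  have e1 : EE x a * EE y (b + 2) = A * s := by
    rw [hA, hs, EE_succ y (b + 1), EE_succ x a]
    push_cast
    field_simp
    ring
  have e2 : EE x (a + 2) * EE y b = A * t := by
    rw [hA, ht, EE_succ x (a + 1), EE_succ y b]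
    push_cast
    field_simp
    ring
  have hs0 : 0 < s := by positivity
  have ht0 : 0 < t := by positivity
  have hst : 1 / 4 ≤ s * t := by
    have : s * t = (((a : ℝ) + 1) * ((b : ℝ) + 1)) / (((b : ℝ) + 2) * ((a : ℝ) + 2)) := by
      rw [hs, ht]; field_simp
    rw [this, div_le_div_iff₀ (by norm_num) (by positivity)]
    have : (0 : ℝ) ≤ a := by positivity
    have : (0 : ℝ) ≤ b := by positivity
    nlinarith [mul_nonneg (Nat.cast_nonneg (α := ℝ) a) (Nat.cast_nonneg (α := ℝ) b)]
  have hsum : 1 ≤ s + t := by nlinarith [sq_nonneg (s - t)]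
  rw [e1, e2] at h
  nlinarith [mul_le_mul_of_nonneg_left hsum hA0]

lemma pair_lemma {x y v : ℝ} (hx : 0 ≤ x) (hy : 0 ≤ y) (hv : 0 ≤ v) (n d : ℕ)
    (h1 : v * (y / ((d : ℝ) + 1)) ≤ x / ((n : ℝ) + 2))
    (h2 : y / ((d : ℝ) + 2) ≤ x / ((n : ℝ) + 1)) :
    (1 + v / 2) * (EE x (n + 1) * EE y (d + 1) + EE x n * EE y (d + 2))
      ≤ EE (x + y) (n + d + 2) := by
  have h := EE_three hx hy n d
  have hC := EE_move (v := v) hx hy (n + 1) d (by push_cast; convert h1 using 2; ring)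
  have hB := EE_move (v := 1) hx hy n (d + 1) (by
    push_cast; rw [one_mul]; convert h2 using 2; ring)
  norm_num [add_assoc] at hC hB h ⊢
  nlinarith

/-! ## Merging -/

section Merge
variable (x0 : ℝ) (c : ℕ) (p : ℕ → ℝ) (a : ℕ → ℕ)

noncomputable def phi (m : ℕ) : ℝ := EE x0 c * ∏ i ∈ range m, EE (p i) (a i)

noncomputable def psi (m : ℕ) : ℝ :=
  (∏ i ∈ range m, EE (p i) (a i)) *
    (EE x0 (c + 1) + EE x0 c * ∑ i ∈ range m, p i / ((a i : ℝ) + 1))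

lemma phi_succ (m : ℕ) : phi x0 c p a (m + 1) = phi x0 c p a m * EE (p m) (a m) := by
  unfold phi; rw [Finset.prod_range_succ]; ring

lemma psi_succ (m : ℕ) : psi x0 c p a (m + 1)
    = psi x0 c p a m * EE (p m) (a m) + phi x0 c p a m * EE (p m) (a m + 1) := by
  unfold psi phi; rw [Finset.prod_range_succ, Finset.sum_range_succ, EE_succ (p m)]; ring

lemma phi_le (hx : 0 ≤ x0) (hp : ∀ i, 0 ≤ p i) (m : ℕ) :
    phi x0 c p a m ≤ EE (x0 + ∑ i ∈ range m, p i) (c + ∑ i ∈ range m, a i) := by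
  induction m with
  | zero => simp [phi]
  | succ m ih =>
    rw [phi_succ, Finset.sum_range_succ, Finset.sum_range_succ, ← add_assoc, ← add_assoc]
    refine (mul_le_mul_of_nonneg_right ih (EE_nonneg (hp m) _)).trans ?_
    exact EE_one (add_nonneg hx (Finset.sum_nonneg fun i _ => hp i)) (hp m) _ _

lemma psi_le (hx : 0 ≤ x0) (hp : ∀ i, 0 ≤ p i) (m : ℕ) :
    psi x0 c p a m ≤ EE (x0 + ∑ i ∈ range m, p i) (c + ∑ i ∈ range m, a i + 1) := by
  induction m with
  | zero => simp [psi]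
  | succ m ih =>
    rw [psi_succ, Finset.sum_range_succ, Finset.sum_range_succ, ← add_assoc, ← add_assoc]
    have h2 := phi_le x0 c p a hx hp m
    have h3 := EE_two (add_nonneg hx (Finset.sum_nonneg fun i (_ : i ∈ range m) => hp i)) (hp m)
      (c + ∑ i ∈ range m, a i) (a m)
    have h4 := mul_le_mul_of_nonneg_right ih (EE_nonneg (hp m) (a m))
    have h5 := mul_le_mul_of_nonneg_right h2 (EE_nonneg (hp m) (a m + 1))
    linarith

end Merge
/-! ## Monotonicity of the thresholds -/

lemma mono_step (c : ℝ) (hc0 : 0 ≤ c) (hc1 : c ≤ 1) (k : ℕ) (hk : 2 ≤ k) :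
    (1 - c / ((k : ℝ) + 1)) ^ k ≤ (1 - c / (k : ℝ)) ^ (k - 1) := by
  obtain ⟨j, rfl⟩ : ∃ j, k = j + 1 := ⟨k - 1, by omega⟩
  simp only [Nat.add_sub_cancel]
  push_cast
  have hj : (1 : ℝ) ≤ j := by
    have : 1 ≤ j := by omega
    exact_mod_cast this
  -- weights: v = u * w
  set u := 1 - c / ((j : ℝ) + 1) with hu
  set w := 1 - c / ((j : ℝ) + 1 + 1) with hw
  have hu' : u = ((j : ℝ) + 1 - c) / ((j : ℝ) + 1) := by rw [hu]; field_simp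
  have hw' : w = ((j : ℝ) + 2 - c) / ((j : ℝ) + 2) := by
    rw [hw]; have : (j : ℝ) + 1 + 1 = j + 2 := by ring
    rw [this]; field_simp
  have hu0 : 0 < u := by rw [hu']; apply div_pos <;> linarith
  have hw0 : 0 < w := by rw [hw']; apply div_pos <;> linarith
  -- Bernoulli
  have hb := one_add_mul_le_pow (a := u / w - 1) (by
    have : 0 ≤ u / w := by positivity
    linarith) j
  have h1 : w ≤ 1 + (j : ℝ) * (u / w - 1) := by
    rw [hu', hw']
    have hne : (j : ℝ) + 2 - c ≠ 0 := by linarith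
    have key : 1 + (j : ℝ) * (((j : ℝ) + 1 - c) / ((j : ℝ) + 1) / (((j : ℝ) + 2 - c) / ((j : ℝ) + 2)) - 1)
        - ((j : ℝ) + 2 - c) / ((j : ℝ) + 2)
        = c * ((2 - c) * (j + 1) - j * (j + 2) + j*(j+2-c) + j*c - j + j ) * 0 +
        c * (((j:ℝ) + 2 - c) * (j + 1) - j * (j + 2)) / ((j + 1) * (j + 2 - c) * (j + 2)) := by
      field_simp
      ring
    have : 0 ≤ c * (((j:ℝ) + 2 - c) * (j + 1) - j * (j + 2)) / ((j + 1) * (j + 2 - c) * (j + 2)) := by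
      apply div_nonneg
      · apply mul_nonneg hc0
        nlinarith
      · have : 0 < (j : ℝ) + 2 - c := by linarith
        positivity
    linarith
  have h2 : w ≤ (u / w) ^ j := by
    calc w ≤ _ := h1
      _ ≤ (1 + (u / w - 1)) ^ j := hb
      _ = _ := by ring_nf
  rw [div_pow, le_div_iff₀ (by positivity)] at h2
  calc w ^ (j + 1) = w * w ^ j := by ring
    _ ≤ u ^ j := h2

lemma mono_from (c : ℝ) (hc0 : 0 ≤ c) (hc1 : c ≤ 1) (k0 k : ℕ) (hk0 : 2 ≤ k0) (hk : k0 ≤ k) :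
    (1 - c / (k : ℝ)) ^ (k - 1) ≤ (1 - c / (k0 : ℝ)) ^ (k0 - 1) := by
  induction k, hk using Nat.le_induction with
  | base => exact le_rfl
  | succ n hn ih =>
    refine le_trans ?_ ih
    have := mono_step c hc0 hc1 n (by omega)
    simpa using this

noncomputable def TT (k : ℕ) : ℝ := 1 - (1 - 1 / (k : ℝ)) ^ (k - 1)

lemma TT_three {k : ℕ} (hk : 3 ≤ k) : 5 / 9 ≤ TT k := by
  have := mono_from 1 (by norm_num) le_rfl 3 k (by norm_num) hk
  unfold TT; norm_num at this ⊢; linarith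

lemma TT_five {k : ℕ} (hk : 5 ≤ k) : 0.59 ≤ TT k := by
  have := mono_from 1 (by norm_num) le_rfl 5 k (by norm_num) hk
  unfold TT; norm_num at this ⊢; linarith

lemma TT_seventeen {k : ℕ} (hk : 17 ≤ k) : 0.6205 ≤ TT k := by
  have := mono_from 1 (by norm_num) le_rfl 17 k (by norm_num) hk
  unfold TT; norm_num at this ⊢; linarith

lemma main_aux (c : ℝ) (hc0 : 0 ≤ c) (hc1 : c ≤ 1) (k0 k : ℕ) (hk0 : 2 ≤ k0) (hk : k0 ≤ k)
    (h : (1 - c / (k0 : ℝ)) ^ (k0 - 1) + (1 - 1 / (k0 : ℝ)) ^ (k0 - 1) < 1) :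
    (1 - c / (k : ℝ)) ^ (k - 1) < TT k := by
  have h1 := mono_from c hc0 hc1 k0 k hk0 hk
  have h2 := mono_from 1 zero_le_one le_rfl k0 k hk0 hk
  unfold TT; linarith

lemma main_value (k r : ℕ)
    (h : (r = 2 ∧ 17 ≤ k) ∨ (r = 3 ∧ 5 ≤ k) ∨ (r = 4 ∧ 4 ≤ k) ∨ (5 ≤ r ∧ 3 ≤ k)) :
    (1 - (1 - 1 / (r : ℝ)) / (k : ℝ)) ^ (k - 1) < TT k := by
  rcases h with ⟨rfl, hk⟩ | ⟨rfl, hk⟩ | ⟨rfl, hk⟩ | ⟨hr, hk⟩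
  · exact main_aux _ (by norm_num) (by norm_num) 17 k (by norm_num) hk (by norm_num)
  · exact main_aux _ (by norm_num) (by norm_num) 5 k (by norm_num) hk (by norm_num)
  · exact main_aux _ (by norm_num) (by norm_num) 4 k (by norm_num) hk (by norm_num)
  · have h1 := main_aux (4 / 5) (by norm_num) (by norm_num) 3 k (by norm_num) hk (by norm_num)
    refine lt_of_le_of_lt ?_ h1
    have hr' : (5 : ℝ) ≤ r := by exact_mod_cast hr
    have hk' : (3 : ℝ) ≤ k := by exact_mod_cast hk
    have h3 : 1 / (r : ℝ) ≤ 1 / 5 := by apply one_div_le_one_div_of_le <;> linarith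
    have h4 : 0 < 1 / (r : ℝ) := by positivity
    apply pow_le_pow_left₀
    · have : (1 - 1 / (r : ℝ)) / (k : ℝ) ≤ 1 := by
        rw [div_le_one (by linarith)]; linarith
      linarith
    · have : (4 / 5) / (k : ℝ) ≤ (1 - 1 / (r : ℝ)) / (k : ℝ) := by
        apply div_le_div_of_nonneg_right <;> linarith
      linarith
/-! ## The space barrier -/

lemma choose_ratio (j x y : ℕ) (hxy : x ≤ y) : x.choose j * y ^ j ≤ y.choose j * x ^ j := by
  have h : x.descFactorial j * y ^ j ≤ y.descFactorial j * x ^ j := by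
    induction j with
    | zero => simp
    | succ j ih =>
      rw [Nat.descFactorial_succ, Nat.descFactorial_succ, pow_succ, pow_succ]
      have h1 : (x - j) * y ≤ (y - j) * x := by
        rcases le_total x j with hj | hj
        · simp [Nat.sub_eq_zero_of_le hj]
        · obtain ⟨u, rfl⟩ := Nat.exists_eq_add_of_le hj
          obtain ⟨w, rfl⟩ := Nat.exists_eq_add_of_le hxy
          have e1 : j + u - j = u := by omega
          have e2 : j + u + w - j = u + w := by omega
          rw [e1, e2]
          nlinarith
      calc (x - j) * x.descFactorial j * (y ^ j * y)
          = ((x - j) * y) * (x.descFactorial j * y ^ j) := by ring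
        _ ≤ ((y - j) * x) * (y.descFactorial j * x ^ j) := Nat.mul_le_mul h1 ih
        _ = _ := by ring
  rw [Nat.descFactorial_eq_factorial_mul_choose, Nat.descFactorial_eq_factorial_mul_choose] at h
  have hp := Nat.factorial_pos j
  refine Nat.le_of_mul_le_mul_left ?_ hp
  calc _ = _ := by ring
    _ ≤ _ := h
    _ = _ := by ring

lemma card_link {n k : ℕ} (_hk : 1 ≤ k) (v : Fin n) (S : Finset (Fin n)) (hv : v ∉ S) :
    ((powersetCard (k - 1) S).image (insert v)).card = S.card.choose (k - 1) := by
  rw [Finset.card_image_of_injOn, Finset.card_powersetCard]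
  intro s hs t ht hst
  have hs' : v ∉ s := fun h => hv ((Finset.mem_powersetCard.1 hs).1 h)
  have ht' : v ∉ t := fun h => hv ((Finset.mem_powersetCard.1 ht).1 h)
  have : (insert v s).erase v = (insert v t).erase v := by
    have : insert v s = insert v t := hst
    rw [this]
  rwa [Finset.erase_insert hs', Finset.erase_insert ht'] at this

lemma hdeg_le {n k : ℕ} (hk : 1 ≤ k) (H : Finset (Finset (Fin n))) (hH : HyperUniform k H)
    (v : Fin n) : hdeg H v ≤ (n - 1).choose (k - 1) := by
  have h := card_link hk v (univ.erase v) (by simp)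
  rw [Finset.card_erase_of_mem (by simp), Finset.card_univ, Fintype.card_fin] at h
  rw [← h]
  apply Finset.card_le_card
  intro e he
  rw [Finset.mem_filter] at he
  refine Finset.mem_image.2 ⟨e.erase v, ?_, Finset.insert_erase he.2⟩
  rw [Finset.mem_powersetCard]
  refine ⟨Finset.erase_subset_erase _ (Finset.subset_univ _), ?_⟩
  rw [Finset.card_erase_of_mem he.2, hH e he.1]

lemma mThr_le {n k : ℕ} (hk : 1 ≤ k) (hn : 1 ≤ n) : mThr k n ≤ (n - 1).choose (k - 1) + 1 := by
  apply Nat.sInf_le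
  intro H hH hd
  have h1 := hd ⟨0, by omega⟩
  have h2 := hdeg_le hk H hH ⟨0, by omega⟩
  omega

lemma mThr_ge {n k t : ℕ} (hk : 1 ≤ k) (ht : 1 ≤ t) (hn : n = k * t) :
    (n - 1).choose (k - 1) ≤ mThr k n + (n - t).choose (k - 1) := by
  have hn1 : 1 ≤ n := by rw [hn]; exact Nat.mul_pos hk ht
  have htn : t ≤ n := by rw [hn]; exact Nat.le_mul_of_pos_left t hk
  have hmem : mThr k n ∈ {m : ℕ | ∀ H : Finset (Finset (Fin n)), HyperUniform k H →
    (∀ v : Fin n, m ≤ hdeg H v) → ∃ M, IsPM H M} := by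
    apply Nat.sInf_mem
    refine ⟨(n - 1).choose (k - 1) + 1, ?_⟩
    intro H hH hd
    have h1 := hd ⟨0, by omega⟩
    have h2 := hdeg_le hk H hH ⟨0, by omega⟩
    omega
  by_contra hcon
  push Not at hcon
  obtain ⟨A, hA⟩ : ∃ A : Finset (Fin n), A.card = t - 1 := by
    obtain ⟨A, _, hA⟩ := Finset.exists_subset_card_eq (s := (univ : Finset (Fin n))) (n := t - 1)
      (by simp; omega)
    exact ⟨A, hA⟩
  set H : Finset (Finset (Fin n)) := (powersetCard k univ).filter (fun e => ¬ Disjoint e A) with hHdef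
  have hU : HyperUniform k H := by
    intro e he
    rw [hHdef, Finset.mem_filter, Finset.mem_powersetCard] at he
    exact he.1.2
  have hdegH : ∀ v : Fin n, mThr k n ≤ hdeg H v := by
    intro v
    have hall := card_link hk v (univ.erase v) (by simp)
    rw [Finset.card_erase_of_mem (by simp), Finset.card_univ, Fintype.card_fin] at hall
    have hkey : (n - 1).choose (k - 1) ≤ hdeg H v + (n - t).choose (k - 1) := by
      have hsub : (powersetCard (k - 1) (univ.erase v)).image (insert v) ⊆
          (H.filter (fun e => v ∈ e)) ∪
            (powersetCard (k - 1) ((univ \ A).erase v)).image (insert v) := by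
        intro e he
        obtain ⟨s, hs, rfl⟩ := Finset.mem_image.1 he
        rw [Finset.mem_powersetCard] at hs
        have hvs : v ∉ s := fun h => by simpa using hs.1 h
        by_cases hd : Disjoint (insert v s) A
        · apply Finset.mem_union_right
          refine Finset.mem_image.2 ⟨s, ?_, rfl⟩
          rw [Finset.mem_powersetCard]
          refine ⟨fun x hx => ?_, hs.2⟩
          have hxA : x ∉ A := Finset.disjoint_left.1 hd (Finset.mem_insert_of_mem hx)
          have : x ≠ v := fun h => hvs (h ▸ hx)
          simp [hxA, this]
        · apply Finset.mem_union_left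
          rw [Finset.mem_filter, hHdef, Finset.mem_filter, Finset.mem_powersetCard]
          refine ⟨⟨⟨Finset.subset_univ _, ?_⟩, hd⟩, Finset.mem_insert_self _ _⟩
          rw [Finset.card_insert_of_notMem hvs, hs.2]; omega
      by_cases hvA : v ∈ A
      · have hsub' : (powersetCard (k - 1) (univ.erase v)).image (insert v) ⊆
          (H.filter (fun e => v ∈ e)) := by
          intro e he
          obtain ⟨s, hs, rfl⟩ := Finset.mem_image.1 he
          rw [Finset.mem_powersetCard] at hs
          have hvs : v ∉ s := fun h => by simpa using hs.1 h
          rw [Finset.mem_filter, hHdef, Finset.mem_filter, Finset.mem_powersetCard]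
          refine ⟨⟨⟨Finset.subset_univ _, ?_⟩, ?_⟩, Finset.mem_insert_self _ _⟩
          · rw [Finset.card_insert_of_notMem hvs, hs.2]; omega
          · exact fun h => Finset.disjoint_left.1 h (Finset.mem_insert_self _ _) hvA
        have := Finset.card_le_card hsub'
        rw [hall] at this
        exact this.trans (Nat.le_add_right _ _)
      · have h1 := Finset.card_le_card hsub
        have h2 := h1.trans (Finset.card_union_le _ _)
        rw [hall, card_link hk v _ (by simp)] at h2
        have hc : ((univ \ A).erase v).card = n - t := by
          rw [Finset.card_erase_of_mem (by simp [hvA]), Finset.card_sdiff_of_subset (Finset.subset_univ _),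
            Finset.card_univ, Fintype.card_fin, hA]
          omega
        rw [hc] at h2
        exact h2
    omega
  obtain ⟨M, hMH, hMd, hMc⟩ := hmem H hU hdegH
  have h1 : M.card ≤ A.card := by
    have hex : ∀ e ∈ M, ∃ x, x ∈ e ∧ x ∈ A := by
      intro e he
      have := hMH he
      rw [hHdef, Finset.mem_filter] at this
      exact Finset.not_disjoint_iff.1 this.2
    have hne : Nonempty (Fin n) := ⟨⟨0, by omega⟩⟩
    choose! g hg using hex
    refine Finset.card_le_card_of_injOn g (fun e he => (hg e he).2) ?_
    intro e he f hf hef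
    by_contra hne
    exact Finset.disjoint_left.1 (hMd e he f hf hne) (hg e he).1 (hef ▸ (hg f hf).1)
  have h2 : n ≤ M.card * k := by
    have : (univ : Finset (Fin n)) ⊆ M.biUnion id := by
      intro v _
      obtain ⟨e, he, hve⟩ := hMc v
      exact Finset.mem_biUnion.2 ⟨e, he, hve⟩
    have h3 := Finset.card_le_card this
    rw [Finset.card_univ, Fintype.card_fin] at h3
    exact h3.trans (Finset.card_biUnion_le_card_mul M id k fun e he => (hU e (hMH he)).le)
  have h4 : k * t ≤ (t - 1) * k := by
    rw [← hn]
    exact h2.trans (Nat.mul_le_mul_right _ (h1.trans hA.le))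
  have h5 : (t - 1) * k < k * t := by
    rw [mul_comm k t]
    exact Nat.mul_lt_mul_of_pos_right (by omega) (by omega)
  omega

lemma TT_le_fThr {k : ℕ} (hk : 2 ≤ k) : TT k ≤ fThr k := by
  set F : Filter ℕ := Filter.atTop ⊓ Filter.principal {n : ℕ | k ∣ n} with hF
  have hne : F.NeBot := by
    rw [hF, ← Filter.frequently_mem_iff_neBot]
    rw [Filter.frequently_atTop]
    intro n
    exact ⟨k * n, Nat.le_mul_of_pos_left n (by omega), dvd_mul_right k n⟩
  set L : ℕ → ℝ := fun n => 1 - (((1 - 1 / (k : ℝ)) * ((n : ℝ) / ((n : ℝ) - 1)))) ^ (k - 1) with hL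
  have hLt : Filter.Tendsto L F (nhds (TT k)) := by
    have h0 : Filter.Tendsto (fun n : ℕ => (n : ℝ) / ((n : ℝ) - 1)) Filter.atTop (nhds 1) := by
      have := tendsto_natCast_div_add_atTop (𝕜 := ℝ) (-1)
      simpa [sub_eq_add_neg] using this
    have h1 : Filter.Tendsto L Filter.atTop (nhds (TT k)) := by
      have := ((h0.const_mul (1 - 1 / (k : ℝ))).pow (k - 1)).const_sub 1
      simpa [TT, hL] using this
    exact h1.mono_left inf_le_left
  have hev : ∀ᶠ n in F, k ≤ n ∧ k ∣ n := by
    rw [hF, Filter.eventually_inf_principal]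
    filter_upwards [Filter.eventually_ge_atTop k] with n hn hd
    exact ⟨hn, hd⟩
  have hle : L ≤ᶠ[F] (fun n : ℕ => (mThr k n : ℝ) / ((n - 1).choose (k - 1) : ℝ)) := by
    filter_upwards [hev] with n hn
    obtain ⟨hkn, t, ht⟩ := hn
    have ht1 : 1 ≤ t := by
      rcases Nat.eq_zero_or_pos t with h | h
      · subst h; simp at ht; omega
      · exact h
    have h1 := mThr_ge (k := k) (by omega) ht1 ht
    have h2 := choose_ratio (k - 1) (n - t) (n - 1) (by omega)
    have hpos : 0 < (n - 1).choose (k - 1) := Nat.choose_pos (by omega)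
    have hpos' : (0 : ℝ) < ((n - 1).choose (k - 1) : ℝ) := by exact_mod_cast hpos
    have htn : t ≤ n := by rw [ht]; exact Nat.le_mul_of_pos_left t (by omega)
    have h1' : ((n - 1).choose (k - 1) : ℝ) ≤ mThr k n + ((n - t).choose (k - 1) : ℝ) := by
      exact_mod_cast h1
    have h2' : ((n - t).choose (k - 1) : ℝ) * ((n : ℝ) - 1) ^ (k - 1)
        ≤ ((n - 1).choose (k - 1) : ℝ) * ((n : ℝ) - t) ^ (k - 1) := by
      have : ((n - t : ℕ) : ℝ) = (n : ℝ) - t := by push_cast [htn]; ring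
      rw [← this]
      have : ((n - 1 : ℕ) : ℝ) = (n : ℝ) - 1 := by
        rw [Nat.cast_sub (by omega)]; simp
      rw [← this]
      exact_mod_cast h2
    have hn1 : (0 : ℝ) < (n : ℝ) - 1 := by
      have : (2 : ℝ) ≤ n := by exact_mod_cast (hk.trans hkn)
      linarith
    have hk0 : (0 : ℝ) < k := by positivity
    have e : (1 - 1 / (k : ℝ)) * ((n : ℝ) / ((n : ℝ) - 1)) = ((n : ℝ) - t) / ((n : ℝ) - 1) := by
      have : (n : ℝ) = k * t := by exact_mod_cast ht
      have h3 : (1 - 1 / (k : ℝ)) * (n : ℝ) = (n : ℝ) - t := by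
        rw [this]; field_simp
      rw [← mul_div_assoc, h3]
    simp only [hL]
    rw [e, div_pow, le_div_iff₀ hpos', sub_mul, one_mul]
    have h4 : ((n - t).choose (k - 1) : ℝ)
        ≤ ((n : ℝ) - t) ^ (k - 1) / ((n : ℝ) - 1) ^ (k - 1) * ((n - 1).choose (k - 1) : ℝ) := by
      rw [div_mul_eq_mul_div, le_div_iff₀ (by positivity)]
      linarith
    linarith
  have hbd : Filter.IsBoundedUnder (· ≤ ·) F
      (fun n : ℕ => (mThr k n : ℝ) / ((n - 1).choose (k - 1) : ℝ)) := by
    refine ⟨2, ?_⟩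
    rw [Filter.eventually_map]
    filter_upwards [hev] with n hn
    have hpos : 0 < (n - 1).choose (k - 1) := Nat.choose_pos (by omega)
    rw [div_le_iff₀ (by exact_mod_cast hpos)]
    have h1 := mThr_le (k := k) (n := n) (by omega) (by omega)
    have : mThr k n ≤ 2 * (n - 1).choose (k - 1) := by omega
    exact_mod_cast this
  have := Filter.limsup_le_limsup hle hLt.isCoboundedUnder_le hbd
  rw [hLt.limsup_eq] at this
  exact this
/-! ## Bounds for `gfun` -/

lemma frac_le {K v α β m n : ℝ} (hK : 0 < K) (hm : 0 < m) (hn : 0 < n)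
    (h : v * (α * n) ≤ β * m) : v * (α / K / m) ≤ β / K / n := by
  rw [div_div, div_div, ← mul_div_assoc, div_le_div_iff₀ (by positivity) (by positivity)]
  nlinarith [mul_le_mul_of_nonneg_right h hK.le]

lemma two_case_one {K : ℝ} (hK : 0 < K) (e : ℕ) (he : 13 ≤ e) {x y : ℝ}
    (hx : x = (1.5 : ℝ) / K) (hy : y = ((e : ℝ) + 2.5) / K) :
    EE x 1 * EE y (e + 2) + EE x 0 * EE y (e + 3) ≤ 0.62 * EE (x + y) (e + 3) := by
  have he' : (13 : ℝ) ≤ e := by exact_mod_cast he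
  have hx0 : 0 ≤ x := by rw [hx]; positivity
  have hy0 : 0 ≤ y := by rw [hy]; positivity
  have h := EE_four hx0 hy0 0 e
  have h1 := EE_move (v := 0.725) hx0 hy0 1 (e + 1) (by
    rw [hx, hy]; push_cast; apply frac_le hK <;> nlinarith)
  have h2 := EE_move (v := 0.45) hx0 hy0 2 e (by
    rw [hx, hy]; push_cast; apply frac_le hK <;> nlinarith)
  have h3 := EE_move (v := 1.5) hx0 hy0 0 (e + 2) (by
    rw [hx, hy]; push_cast; apply frac_le hK <;> nlinarith)
  have hA0 := mul_nonneg (EE_nonneg hx0 1) (EE_nonneg hy0 (e + 2))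
  norm_num [add_assoc] at h h1 h2 h3 ⊢
  linarith

lemma two_case_more {K : ℝ} (hK : 0 < K) (j e : ℕ) (he : 6 ≤ e) {x y : ℝ}
    (hx : x = ((j : ℝ) + 2.5) / K) (hy : y = ((e : ℝ) + 2.5) / K) :
    EE x (j + 2) * EE y (e + 2) + EE x (j + 1) * EE y (e + 3)
      ≤ 0.62 * EE (x + y) (j + e + 4) := by
  have he' : (6 : ℝ) ≤ e := by exact_mod_cast he
  have hj' : (0 : ℝ) ≤ j := by positivity
  have hje : 0 ≤ (j : ℝ) * ((e : ℝ) - 6) := mul_nonneg hj' (by linarith)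
  have hx0 : 0 ≤ x := by rw [hx]; positivity
  have hy0 : 0 ≤ y := by rw [hy]; positivity
  have h := EE_five hx0 hy0 j e
  have h1 := EE_move (v := 0.78) hx0 hy0 (j + 2) (e + 1) (by
    rw [hx, hy]; push_cast; apply frac_le hK <;> nlinarith)
  have h2 := EE_move (v := 0.5) hx0 hy0 (j + 3) e (by
    rw [hx, hy]; push_cast; apply frac_le hK <;> nlinarith)
  have h3 := EE_move (v := 1) hx0 hy0 (j + 1) (e + 2) (by
    rw [hx, hy]; push_cast; apply frac_le hK <;> nlinarith)
  have h4 := EE_move' (v := 0.3) hx0 hy0 j (e + 3) (by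
    rw [hx, hy]; push_cast; apply frac_le hK <;> nlinarith)
  have hA0 := mul_nonneg (EE_nonneg hx0 (j + 2)) (EE_nonneg hy0 (e + 2))
  norm_num [add_assoc] at h h1 h2 h3 h4 ⊢
  linarith

lemma two_case {K : ℝ} (hK : 0 < K) (c d : ℕ) (hd : c + 1 ≤ d) (hs : 16 ≤ c + 1 + d) {x y : ℝ}
    (hx : x = ((c : ℝ) + 1 + 1 / 2) / K) (hy : y = ((d : ℝ) + 1 / 2) / K) :
    EE x (c + 1) * EE y d + EE x c * EE y (d + 1) ≤ 0.62 * EE (x + y) (c + 1 + d) := by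
  obtain ⟨e, rfl⟩ : ∃ e, d = e + 2 := ⟨d - 2, by omega⟩
  have hy' : y = ((e : ℝ) + 2.5) / K := by rw [hy]; push_cast; congr 1; norm_num; ring
  rcases c with _ | j
  · have := two_case_one hK e (by omega) (x := x) (y := y)
      (by rw [hx]; norm_num) hy'
    convert this using 2
    congr 1
    omega
  · have := two_case_more hK j e (by omega) (x := x) (y := y)
      (by rw [hx]; push_cast; congr 1; norm_num; ring) hy'
    convert this using 2
    congr 1
    omega

noncomputable def pp (k r : ℕ) (a : ℕ → ℕ) (i : ℕ) : ℝ :=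
  ((r * a i + 1 : ℕ) : ℝ) / ((r * k : ℕ) : ℝ)

lemma pp_pos {k r : ℕ} (hk : 0 < k) (hr : 0 < r) (a : ℕ → ℕ) (i : ℕ) : 0 < pp k r a i := by
  unfold pp
  have : 0 < r * k := Nat.mul_pos hr hk
  positivity

lemma pp_eq {k r : ℕ} (hr : 0 < r) (a : ℕ → ℕ) (i : ℕ) :
    pp k r a i = ((a i : ℝ) + 1 / (r : ℝ)) / (k : ℝ) := by
  unfold pp
  have : (r : ℝ) ≠ 0 := by positivity
  push_cast
  rw [← div_div]
  congr 1
  field_simp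

lemma pp_sum {k r : ℕ} (hr : 0 < r) (a : ℕ → ℕ) (m : ℕ) :
    ∑ i ∈ range m, pp k r a i = (((∑ i ∈ range m, a i : ℕ) : ℝ) + m / (r : ℝ)) / (k : ℝ) := by
  induction m with
  | zero => simp
  | succ m ih =>
    rw [Finset.sum_range_succ, ih, Finset.sum_range_succ, pp_eq hr]
    push_cast
    ring

lemma gfun_eq (k r : ℕ) (a : ℕ → ℕ) :
    gfun k r a = ((k - 1).factorial : ℝ) * (∏ i ∈ range r, EE (pp k r a i) (a i)) *
    (1 + ((a 0 : ℝ) / ((r * a 0 + 1 : ℕ) : ℝ)) *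
      ∑ i ∈ Finset.Ico 1 r, ((r * a i + 1 : ℕ) : ℝ) / ((a i + 1 : ℕ) : ℝ)) := by
  unfold gfun EE pp
  rw [Finset.prod_div_distrib, div_mul_eq_mul_div, mul_div_assoc]

lemma gfun_zero (k m : ℕ) (a : ℕ → ℕ) (h0 : a 0 = 0) :
    gfun k (m + 1) a = ((k - 1).factorial : ℝ) *
      phi (pp k (m + 1) a 0) 0 (fun i => pp k (m + 1) a (i + 1)) (fun i => a (i + 1)) m := by
  rw [gfun_eq, h0, Finset.prod_range_succ']
  unfold phi
  rw [h0]
  simp only [Nat.cast_zero, zero_div, zero_mul, add_zero, mul_one]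
  ring

lemma gfun_succ (k m c : ℕ) (hk : 0 < k) (a : ℕ → ℕ) (h0 : a 0 = c + 1) :
    gfun k (m + 1) a = ((k - 1).factorial : ℝ) *
      psi (pp k (m + 1) a 0) c (fun i => pp k (m + 1) a (i + 1)) (fun i => a (i + 1)) m := by
  rw [gfun_eq, Finset.prod_range_succ', Finset.sum_Ico_eq_sum_range]
  unfold psi
  have hrk : ((((m + 1) * k : ℕ)) : ℝ) ≠ 0 := by
    have : 0 < (m + 1) * k := Nat.mul_pos (by omega) hk
    positivity
  have hs : ∑ i ∈ range m, pp k (m + 1) a (i + 1) / ((a (i + 1) : ℝ) + 1)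
      = (∑ i ∈ range (m + 1 - 1), (((m + 1) * a (1 + i) + 1 : ℕ) : ℝ) / ((a (1 + i) + 1 : ℕ) : ℝ))
        / (((m + 1) * k : ℕ) : ℝ) := by
    rw [Finset.sum_div, Nat.add_sub_cancel]
    refine Finset.sum_congr rfl fun i _ => ?_
    rw [add_comm i 1]
    unfold pp
    push_cast
    rw [div_right_comm]
  rw [hs, h0, EE_succ]
  set S := ∑ i ∈ range (m + 1 - 1), (((m + 1) * a (1 + i) + 1 : ℕ) : ℝ) / ((a (1 + i) + 1 : ℕ) : ℝ)
  set Q := ∏ i ∈ range m, EE (pp k (m + 1) a (i + 1)) (a (i + 1))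
  have hp : pp k (m + 1) a 0 = (((m + 1) * (c + 1) + 1 : ℕ) : ℝ) / (((m + 1) * k : ℕ) : ℝ) := by
    unfold pp; rw [h0]
  set E := EE (pp k (m + 1) a 0) c
  rw [hp]
  have h1 : (((m + 1) * (c + 1) + 1 : ℕ) : ℝ) ≠ 0 := by positivity
  set D := (((m + 1) * k : ℕ) : ℝ)
  set U := (((m + 1) * (c + 1) + 1 : ℕ) : ℝ)
  have h2 : ((c : ℝ) + 1) ≠ 0 := by positivity
  push_cast
  field_simp

lemma sum_split (a : ℕ → ℕ) (m : ℕ) :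
    a 0 + ∑ i ∈ range m, a (i + 1) = ∑ i ∈ range (m + 1), a i := by
  rw [Finset.sum_range_succ', add_comm]

lemma pp_split (k r : ℕ) (a : ℕ → ℕ) (m : ℕ) :
    pp k r a 0 + ∑ i ∈ range m, pp k r a (i + 1) = ∑ i ∈ range (m + 1), pp k r a i := by
  rw [Finset.sum_range_succ', add_comm]

lemma pp_total {k r : ℕ} (hk : 1 ≤ k) (hr : 0 < r) (a : ℕ → ℕ)
    (hs : ∑ i ∈ range r, a i = k - 1) : ∑ i ∈ range r, pp k r a i = 1 := by
  rw [pp_sum hr, hs]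
  have : (r : ℝ) ≠ 0 := by positivity
  have : (k : ℝ) ≠ 0 := by positivity
  rw [div_self ‹(r : ℝ) ≠ 0›]
  push_cast [hk]
  field_simp
  ring

lemma fact_EE (N : ℕ) : (N.factorial : ℝ) * EE 1 N = 1 := by
  unfold EE
  have : (N.factorial : ℝ) ≠ 0 := by positivity
  rw [one_pow]; field_simp

/-- the case of a first coordinate equal to zero -/
lemma gfun_bound_zero (k m : ℕ) (hk : 3 ≤ k) (a : ℕ → ℕ) (h : IsVec k (m + 2) a) (h0 : a 0 = 0) :
    gfun k (m + 2) a ≤ max (1 / 2) ((1 - (1 - 1 / ((m + 2 : ℕ) : ℝ)) / (k : ℝ)) ^ (k - 1)) := by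
  obtain ⟨hmono, hsum⟩ := h
  have hpos := fun i => pp_pos (k := k) (r := m + 2) (by omega) (by omega) a i
  rw [gfun_zero k (m + 1) a h0, phi_succ]
  have h1 := phi_le (pp k (m + 2) a 0) 0 (fun i => pp k (m + 2) a (i + 1)) (fun i => a (i + 1))
    (hpos 0).le (fun i => (hpos _).le) m
  have htot := pp_total (by omega) (by omega) a hsum
  rw [Finset.sum_range_succ] at hsum htot
  rw [pp_split] at h1
  have hA := sum_split a m
  rw [h0] at hA
  rw [hA] at h1
  set P := ∑ i ∈ range (m + 1), pp k (m + 2) a i with hP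
  set A := ∑ i ∈ range (m + 1), a i with hAdef
  set z := pp k (m + 2) a (m + 1) with hz
  set f := a (m + 1) with hf
  have hP0 : 0 < P := Finset.sum_pos (fun i _ => hpos i) (by simp)
  have hz0 : 0 < z := hpos _
  have hfp : 1 ≤ f := by
    by_contra hcon
    have hA0 : A = 0 := by
      rw [hAdef]
      apply Finset.sum_eq_zero
      intro i hi
      have := hmono i (m + 1) (by simp at hi; omega) (by omega)
      omega
    omega
  have h2 : ((k - 1).factorial : ℝ) * (phi (pp k (m + 2) a 0) 0 (fun i => pp k (m + 2) a (i + 1))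
      (fun i => a (i + 1)) m * EE z f) ≤ ((k - 1).factorial : ℝ) * (EE P A * EE z f) := by
    have := EE_nonneg hz0.le f
    gcongr
  refine h2.trans ?_
  rcases Nat.eq_zero_or_pos A with hA0 | hA0
  · apply le_max_of_le_right
    rw [hA0, EE_zero, one_mul]
    have hfk : f = k - 1 := by omega
    rw [hfk]
    unfold EE
    have : ((k - 1).factorial : ℝ) ≠ 0 := by positivity
    rw [mul_div_cancel₀ _ this]
    apply le_of_eq
    congr 1
    rw [hz, pp_eq (by omega), ← hf, hfk]
    push_cast [show 1 ≤ k by omega]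
    have : (k : ℝ) ≠ 0 := by positivity
    field_simp
    ring
  · apply le_max_of_le_left
    obtain ⟨A', hA'⟩ : ∃ A', A = A' + 1 := ⟨A - 1, by omega⟩
    obtain ⟨f', hf'⟩ : ∃ f', f = f' + 1 := ⟨f - 1, by omega⟩
    have h3 := half_lemma hP0 hz0 A' f'
    rw [htot, ← hA', ← hf', show A' + f' + 2 = k - 1 by omega] at h3
    calc _ ≤ ((k - 1).factorial : ℝ) * (1 / 2 * EE 1 (k - 1)) := by gcongr
      _ = 1 / 2 * (((k - 1).factorial : ℝ) * EE 1 (k - 1)) := by ring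
      _ = 1 / 2 := by rw [fact_EE, mul_one]

lemma gfun_bound_two (k : ℕ) (hk : 17 ≤ k) (a : ℕ → ℕ) (h : IsVec k 2 a) (h0 : 1 ≤ a 0) :
    gfun k 2 a ≤ 0.62 := by
  obtain ⟨hmono, hsum⟩ := h
  obtain ⟨c, hc⟩ : ∃ c, a 0 = c + 1 := ⟨a 0 - 1, by omega⟩
  rw [gfun_succ k 1 c (by omega) a hc, psi_succ]
  have htot := pp_total (k := k) (r := 2) (by omega) (by omega) a hsum
  simp only [Finset.sum_range_succ, Finset.sum_range_zero, zero_add] at hsum htot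
  have h01 := hmono 0 1 (by omega) (by omega)
  have hK : (0 : ℝ) < k := by
    have : 0 < k := by omega
    exact_mod_cast this
  have h1 := two_case hK c (a 1) (by omega) (by omega)
    (x := pp k 2 a 0) (y := pp k 2 a 1)
    (by rw [pp_eq (by omega), hc]; push_cast; ring) (by rw [pp_eq (by omega)]; norm_num)
  rw [htot, show c + 1 + a 1 = k - 1 by omega] at h1
  have h2 := mul_le_mul_of_nonneg_left h1 (Nat.cast_nonneg (α := ℝ) (k - 1).factorial)
  have h3 := fact_EE (k - 1)
  simp [psi, phi] at h2 h3 ⊢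
  nlinarith

lemma cond_three {s f ρ : ℝ} (hs : 0 ≤ s) (hf : 1 ≤ f) (hρ : ρ ≤ 1 / 3) :
    3 / 4 * ((f + 1 + ρ) * (s + 3)) ≤ (s + 3 - ρ) * (f + 1) := by
  have h1 : 3 / 4 * ((f + 1 + ρ) * (s + 3)) ≤ 3 / 4 * ((f + 1 + 1 / 3) * (s + 3)) := by gcongr
  have h2 : (s + 3 - 1 / 3) * (f + 1) ≤ (s + 3 - ρ) * (f + 1) := by gcongr
  nlinarith [mul_nonneg hs (sub_nonneg.2 hf)]

lemma cond_four {s f ρ : ℝ} (hs : 1 ≤ s) (hf : 0 ≤ f) (hρ : ρ ≤ 1 / 4) :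
    3 / 4 * ((f + 1 + ρ) * (s + 3)) ≤ (s + 3 - ρ) * (f + 1) := by
  have h1 : 3 / 4 * ((f + 1 + ρ) * (s + 3)) ≤ 3 / 4 * ((f + 1 + 1 / 4) * (s + 3)) := by gcongr
  have h2 : (s + 3 - 1 / 4) * (f + 1) ≤ (s + 3 - ρ) * (f + 1) := by gcongr
  nlinarith [mul_nonneg hf (sub_nonneg.2 hs)]

set_option maxHeartbeats 2000000 in
lemma gfun_bound_more (k m : ℕ) (hk : 5 ≤ k) (a : ℕ → ℕ) (h : IsVec k (m + 3) a)
    (h0 : 1 ≤ a 0) : gfun k (m + 3) a ≤ 0.582 := by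
  obtain ⟨hmono, hsum⟩ := h
  have hpos := fun i => pp_pos (k := k) (r := m + 3) (by omega) (by omega) a i
  have hone : ∀ i, i < m + 3 → 1 ≤ a i := fun i hi => h0.trans (hmono 0 i (by omega) hi)
  obtain ⟨c, hc⟩ : ∃ c, a 0 = c + 1 := ⟨a 0 - 1, by omega⟩
  rw [gfun_succ k (m + 2) c (by omega) a hc, psi_succ, psi_succ, phi_succ]
  have hphi := phi_le (pp k (m + 3) a 0) c (fun i => pp k (m + 3) a (i + 1)) (fun i => a (i + 1))
    (hpos 0).le (fun i => (hpos _).le) m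
  have hpsi := psi_le (pp k (m + 3) a 0) c (fun i => pp k (m + 3) a (i + 1)) (fun i => a (i + 1))
    (hpos 0).le (fun i => (hpos _).le) m
  have htot := pp_total (by omega) (by omega) a hsum
  rw [pp_split] at hphi hpsi
  have hA := sum_split a m
  have hPs := pp_sum (k := k) (r := m + 3) (by omega) a (m + 1)
  have hQs := pp_sum (k := k) (r := m + 3) (by omega) a (m + 2)
  have hAm : m + 1 ≤ ∑ i ∈ range (m + 1), a i := by
    have := Finset.card_nsmul_le_sum (range (m + 1)) a 1
      (fun i hi => hone i (by simp at hi; omega))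
    simpa using this
  rw [Finset.sum_range_succ _ (m + 2), Finset.sum_range_succ _ (m + 1)] at hsum htot
  rw [Finset.sum_range_succ _ (m + 1), Finset.sum_range_succ _ (m + 1)] at hQs
  set T := c + ∑ i ∈ range m, a (i + 1) with hT
  have hTA : ∑ i ∈ range (m + 1), a i = T + 1 := by omega
  rw [hTA] at hsum hPs hQs hAm
  set F := phi (pp k (m + 3) a 0) c (fun i => pp k (m + 3) a (i + 1)) (fun i => a (i + 1)) m
  set G := psi (pp k (m + 3) a 0) c (fun i => pp k (m + 3) a (i + 1)) (fun i => a (i + 1)) m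
  set P := ∑ i ∈ range (m + 1), pp k (m + 3) a i with hP
  have hP0 : 0 < P := Finset.sum_pos (fun i _ => hpos i) (by simp)
  have hy0 := hpos (m + 1)
  have hz0 := hpos (m + 2)
  have hye := pp_eq (k := k) (r := m + 3) (by omega) a (m + 1)
  have hze := pp_eq (k := k) (r := m + 3) (by omega) a (m + 2)
  have hd1 := hone (m + 1) (by omega)
  have hf1 := hone (m + 2) (by omega)
  have hfd := hmono (m + 1) (m + 2) (by omega) (by omega)
  have hTd := hmono 0 (m + 1) (by omega) (by omega)
  have hf2 : m = 0 → 2 ≤ a (m + 2) := by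
    intro hm
    subst hm
    simp at hT
    omega
  show _ * ((G * EE (pp k (m + 3) a (m + 1)) (a (m + 1)) + F * EE (pp k (m + 3) a (m + 1)) (a (m + 1) + 1))
      * EE (pp k (m + 3) a (m + 2)) (a (m + 2)) + F * EE (pp k (m + 3) a (m + 1)) (a (m + 1))
      * EE (pp k (m + 3) a (m + 2)) (a (m + 2) + 1)) ≤ _
  set y := pp k (m + 3) a (m + 1)
  set z := pp k (m + 3) a (m + 2)
  obtain ⟨d, hd⟩ : ∃ d, a (m + 1) = d + 1 := ⟨a (m + 1) - 1, by omega⟩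
  obtain ⟨f, hf⟩ : ∃ f, a (m + 2) = f + 1 := ⟨a (m + 2) - 1, by omega⟩
  rw [hd] at hye hsum hQs ⊢
  rw [hf] at hze hsum hf2 ⊢
  set ρ : ℝ := 1 / ((m + 3 : ℕ) : ℝ) with hρ
  have hρ0 : 0 < ρ := by positivity
  have hρm : ρ * ((m : ℝ) + 3) = 1 := by rw [hρ]; push_cast; field_simp
  have hm0 : (0 : ℝ) ≤ m := by positivity
  have hρ3 : ρ ≤ 1 / 3 := by nlinarith
  have hPe : P = ((T : ℝ) + 2 - 2 * ρ) / (k : ℝ) := by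
    rw [hPs, hρ]; congr 1; push_cast; field_simp; ring
  have hQe : P + y = ((T : ℝ) + d + 3 - ρ) / (k : ℝ) := by
    rw [hQs, hρ]; congr 1; push_cast; field_simp; ring
  have hK : (0 : ℝ) < k := by
    have : 0 < k := by omega
    exact_mod_cast this
  have hT0 : (0 : ℝ) ≤ T := by positivity
  have hd0 : (0 : ℝ) ≤ d := by positivity
  have hf0 : (0 : ℝ) ≤ f := by positivity
  -- first level
  have L1 := pair_lemma (v := 1 / 2) hP0.le hy0.le (by norm_num) T d
    (by rw [hPe, hye]; push_cast; apply frac_le hK (by positivity) (by positivity); nlinarith)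
    (by
      rw [hPe, hye, ← one_mul (_ / _ / _)]; push_cast
      apply frac_le hK (by positivity) (by positivity); nlinarith)
  have L0 : 7 / 4 * (EE P T * EE y (d + 1)) ≤ EE (P + y) (T + d + 1) := by
    have u1 := EE_two hP0.le hy0.le T d
    have u2 := EE_move (v := 3 / 4) hP0.le hy0.le T d (by
      rw [hPe, hye]; push_cast; apply frac_le hK (by positivity) (by positivity); nlinarith)
    linarith
  -- second level
  have hcond : 3 / 4 * (((f : ℝ) + 1 + ρ) * ((T : ℝ) + d + 3)) ≤ ((T : ℝ) + d + 3 - ρ) * ((f : ℝ) + 1) := by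
    rcases Nat.eq_zero_or_pos m with hm | hm
    · have hf1 : (1 : ℝ) ≤ f := by
        have := hf2 hm
        have : 1 ≤ f := by omega
        exact_mod_cast this
      exact cond_three (by positivity) hf1 hρ3
    · have hm1 : (1 : ℝ) ≤ m := by exact_mod_cast hm
      have hρ4 : ρ ≤ 1 / 4 := by nlinarith
      have hT1 : (1 : ℝ) ≤ T := by
        have : 1 ≤ T := by omega
        exact_mod_cast this
      exact cond_four (by linarith) hf0 hρ4
  have L2 := pair_lemma (v := 3 / 4) (add_pos hP0 hy0).le hz0.le (by norm_num) (T + d + 1) f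
    (by
      rw [hQe, hze]; push_cast
      apply frac_le hK (by positivity) (by positivity)
      nlinarith [hcond])
    (by
      rw [hQe, hze, ← one_mul (_ / _ / _)]; push_cast
      apply frac_le hK (by positivity) (by positivity); nlinarith)
  rw [htot, show T + d + 1 + f + 2 = k - 1 by omega] at L2
  have hyd := EE_nonneg hy0.le (d + 1)
  have hyd' := EE_nonneg hy0.le (d + 1 + 1)
  have hzf := EE_nonneg hz0.le (f + 1)
  have hzf' := EE_nonneg hz0.le (f + 1 + 1)
  have M1 : G * EE y (d + 1) + F * EE y (d + 1 + 1) ≤ 0.8 * EE (P + y) (T + d + 1 + 1) := by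
    have w1 := mul_le_mul_of_nonneg_right hpsi hyd
    have w2 := mul_le_mul_of_nonneg_right hphi hyd'
    norm_num [add_assoc] at L1 w1 w2 ⊢
    linarith
  have M0 : F * EE y (d + 1) ≤ 0.8 * EE (P + y) (T + d + 1) := by
    have w1 := mul_le_mul_of_nonneg_right hphi hyd
    have := EE_nonneg (add_pos hP0 hy0).le (T + d + 1)
    linarith
  have M2 := mul_le_mul_of_nonneg_right M1 hzf
  have M3 := mul_le_mul_of_nonneg_right M0 hzf'
  have hfac := fact_EE (k - 1)
  have hE : 0 ≤ EE 1 (k - 1) := EE_nonneg zero_le_one _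
  have M4 : (G * EE y (d + 1) + F * EE y (d + 1 + 1)) * EE z (f + 1)
      + F * EE y (d + 1) * EE z (f + 1 + 1) ≤ 0.582 * EE 1 (k - 1) := by
    norm_num [add_assoc] at L2 M2 M3 hE ⊢
    linarith
  calc _ ≤ ((k - 1).factorial : ℝ) * (0.582 * EE 1 (k - 1)) := by gcongr
    _ = 0.582 * (((k - 1).factorial : ℝ) * EE 1 (k - 1)) := by ring
    _ = 0.582 := by rw [hfac, mul_one]

theorem f_gt_g (k r : ℕ)
    (h : (r = 2 ∧ 17 ≤ k) ∨ (r = 3 ∧ 5 ≤ k) ∨ (r = 4 ∧ 4 ≤ k) ∨ (5 ≤ r ∧ 3 ≤ k)) :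
    gThr k r < fThr k := by
  have hk : 3 ≤ k := by omega
  have hr : 2 ≤ r := by omega
  refine lt_of_lt_of_le ?_ (TT_le_fThr (by omega))
  have hT3 := TT_three hk
  have hmain := main_value k r h
  set B := (1 - (1 - 1 / (r : ℝ)) / (k : ℝ)) ^ (k - 1) with hB
  -- bound in case of a positive first coordinate
  obtain ⟨C, hC, hCb⟩ : ∃ C, C < TT k ∧ ∀ a, IsVec k r a → 1 ≤ a 0 → gfun k r a ≤ C := by
    rcases Nat.lt_or_ge r 3 with hr3 | hr3
    · have hr2 : r = 2 := by omega
      subst hr2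
      have hk17 : 17 ≤ k := by omega
      refine ⟨0.62, lt_of_lt_of_le (by norm_num) (TT_seventeen hk17), ?_⟩
      exact fun a ha h0 => gfun_bound_two k hk17 a ha h0
    · by_cases hk5 : 5 ≤ k
      · refine ⟨0.582, lt_of_lt_of_le (by norm_num) (TT_five hk5), ?_⟩
        obtain ⟨m, rfl⟩ : ∃ m, r = m + 3 := ⟨r - 3, by omega⟩
        exact fun a ha h0 => gfun_bound_more k m hk5 a ha h0
      · refine ⟨0, by linarith, fun a ha h0 => ?_⟩
        exfalso
        have := Finset.card_nsmul_le_sum (range r) a 1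
          (fun i hi => h0.trans (ha.1 0 i (by omega) (by simpa using hi)))
        rw [ha.2] at this
        simp at this
        omega
  have hle : gThr k r ≤ max (max (1 / 2) B) C := by
    apply Real.sSup_le
    · rintro x ⟨a, ha, rfl⟩
      rcases Nat.eq_zero_or_pos (a 0) with h0 | h0
      · obtain ⟨m, rfl⟩ : ∃ m, r = m + 2 := ⟨r - 2, by omega⟩
        exact le_max_of_le_left (gfun_bound_zero k m hk a ha h0)
      · exact le_max_of_le_right (hCb a ha h0)
    · apply le_max_of_le_left
      apply le_max_of_le_left
      norm_num
  refine lt_of_le_of_lt hle ?_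
  rw [max_lt_iff, max_lt_iff]
  exact ⟨⟨by linarith, hmain⟩, hC⟩
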